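/- Let N ≥ 1, p, q ≥ 0, r₁, r₂ ∈ [1,∞), and set P = N(p/r₂ − 1/r₁), Q = N(q/r₁ − 1/r₂). Assume P > 0 and Q > 0. Then there exist positive constants γ₄ and C (independent of the data) with the following property: for all nonnegative measurable u₀, v₀ on ℝ^N, setting W₀ = u₀^{r₁} + v₀^{r₂}, if S(t)W₀ ∈ L^∞(ℝ^N) for all t > 0 and ∫₀^T ( ‖S(s)W₀‖_{L^∞(ℝ^N)}^{P/N} + ‖S(s)W₀‖_{L^∞(ℝ^N)}^{Q/N} ) ds ≤ γ₄ for some T > 0, then the system (S) possesses a solution (u,v) on ℝ^N × (0, T] satisfying 0 ≤ u(x,t)^{r₁} + v(x,t)^{r₂} ≤ C [S(t)W₀](x) for a.e. x ∈ ℝ^N and all t ∈ (0, T]. -/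

import Mathlib

open MeasureTheory ENNReal Filter

noncomputable section

/-- Euclidean space `ℝ^N`. -/
abbrev Euc (N : ℕ) := EuclideanSpace ℝ (Fin N)

/-- The heat semigroup applied to a (nonnegative) function `φ` on `ℝ^N`, with values in `[0,∞]`:
`[S(t)φ](x) = ∫ (4πt)^{-N/2} exp(-|x-y|²/(4t)) φ(y) dy`. -/
noncomputable def heatS (N : ℕ) (t : ℝ) (φ : Euc N → ℝ) (x : Euc N) : ℝ≥0∞ :=
  ∫⁻ y, ENNReal.ofReal
    ((4 * Real.pi * t) ^ (-(N : ℝ) / 2) * Real.exp (-‖x - y‖ ^ 2 / (4 * t)) * φ y)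

/-- The `L^∞` norm of `S(t)φ` on `ℝ^N`. -/
noncomputable def heatSup (N : ℕ) (t : ℝ) (φ : Euc N → ℝ) : ℝ≥0∞ :=
  essSup (heatS N t φ) volume

/-- The `L^{r,∞}(E)` quasinorm: for `1 < r < ∞` it is
`sup_{λ>0} λ |{x ∈ E : |f x| > λ}|^{1/r}`; for `r = 1` (resp. `r = ∞`)
it is the usual `L¹(E)` (resp. `L^∞(E)`) norm. -/
noncomputable def wnorm (N : ℕ) (r : ℝ≥0∞) (f : Euc N → ℝ) (E : Set (Euc N)) : ℝ≥0∞ :=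
  if r = 1 then ∫⁻ x in E, ENNReal.ofReal |f x|
  else if r = ⊤ then essSup (fun x => ENNReal.ofReal |f x|) (volume.restrict E)
  else ⨆ (l : ℝ) (_ : 0 < l), ENNReal.ofReal l * (volume {x ∈ E | l < |f x|}) ^ (1 / r.toReal)

/-- The uniformly local quasinorm `|||f|||_{r,ρ} = sup_x ‖f‖_{L^{r,∞}(B(x,ρ))}`
(for `r = ∞` it is the `L^∞(ℝ^N)` norm). -/
noncomputable def ulocNorm (N : ℕ) (r : ℝ≥0∞) (ρ : ℝ) (f : Euc N → ℝ) : ℝ≥0∞ :=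
  if r = ⊤ then essSup (fun x => ENNReal.ofReal |f x|) volume
  else ⨆ x : Euc N, wnorm N r f (Metric.ball x ρ)

/-- `u ∈ L^∞(τ, T-τ; L^∞(ℝ^N))` for every `τ ∈ (0, T/2)`. -/
def LocBdd (N : ℕ) (T : ℝ≥0∞) (u : Euc N → ℝ → ℝ) : Prop :=
  ∀ τ : ℝ, 0 < τ → ENNReal.ofReal (2 * τ) < T →
    ∃ M : ℝ, ∀ t : ℝ, τ ≤ t → ENNReal.ofReal (t + τ) ≤ T →
      ∀ᵐ x ∂(volume : Measure (Euc N)), |u x t| ≤ M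

/-- Regularity requirements on a pair `(u,v)`: nonnegativity, joint measurability and
uniform boundedness away from `t = 0` and `t = T`. -/
def PairRegular (N : ℕ) (T : ℝ≥0∞) (u v : Euc N → ℝ → ℝ) : Prop :=
  (∀ x t, 0 ≤ u x t) ∧ (∀ x t, 0 ≤ v x t) ∧
  Measurable (Function.uncurry u) ∧ Measurable (Function.uncurry v) ∧
  LocBdd N T u ∧ LocBdd N T v

/-- The Duhamel identities for the system (S) `∂ₜu = Δu + v^p`, `∂ₜv = Δv + u^q` at time `t`. -/
def DuhamelSys (N : ℕ) (p q : ℝ) (u₀ v₀ : Euc N → ℝ) (u v : Euc N → ℝ → ℝ) (t : ℝ) : Prop :=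
  (∀ᵐ x ∂(volume : Measure (Euc N)), ENNReal.ofReal (u x t) =
      heatS N t u₀ x + ∫⁻ s in Set.Ioo 0 t, heatS N (t - s) (fun y => v y s ^ p) x) ∧
  (∀ᵐ x ∂(volume : Measure (Euc N)), ENNReal.ofReal (v x t) =
      heatS N t v₀ x + ∫⁻ s in Set.Ioo 0 t, heatS N (t - s) (fun y => u y s ^ q) x)

/-- The Duhamel inequalities (`≥`, with finite left-hand side) for the system (S) at time `t`. -/
def DuhamelSuperSys (N : ℕ) (p q : ℝ) (u₀ v₀ : Euc N → ℝ) (u v : Euc N → ℝ → ℝ) (t : ℝ) : Prop :=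
  (∀ᵐ x ∂(volume : Measure (Euc N)),
      heatS N t u₀ x + (∫⁻ s in Set.Ioo 0 t, heatS N (t - s) (fun y => v y s ^ p) x) ≤
        ENNReal.ofReal (u x t)) ∧
  (∀ᵐ x ∂(volume : Measure (Euc N)),
      heatS N t v₀ x + (∫⁻ s in Set.Ioo 0 t, heatS N (t - s) (fun y => u y s ^ q) x) ≤
        ENNReal.ofReal (v x t))

/-- `(u,v)` is a solution of the system (S) on `ℝ^N × (0,T)`. -/
def IsSolSys (N : ℕ) (p q : ℝ) (u₀ v₀ : Euc N → ℝ) (T : ℝ≥0∞) (u v : Euc N → ℝ → ℝ) : Prop :=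
  PairRegular N T u v ∧
  ∀ t : ℝ, 0 < t → ENNReal.ofReal t < T → DuhamelSys N p q u₀ v₀ u v t

/-- `(u,v)` is a supersolution of the system (S) on `ℝ^N × (0,T)`. -/
def IsSuperSys (N : ℕ) (p q : ℝ) (u₀ v₀ : Euc N → ℝ) (T : ℝ≥0∞) (u v : Euc N → ℝ → ℝ) : Prop :=
  PairRegular N T u v ∧
  ∀ t : ℝ, 0 < t → ENNReal.ofReal t < T → DuhamelSuperSys N p q u₀ v₀ u v t

/-- `(u,v)` is the minimal solution of the system (S) on `ℝ^N × (0,T)`. -/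
def IsMinSolSys (N : ℕ) (p q : ℝ) (u₀ v₀ : Euc N → ℝ) (T : ℝ≥0∞)
    (u v : Euc N → ℝ → ℝ) : Prop :=
  IsSolSys N p q u₀ v₀ T u v ∧
  ∀ u' v' : Euc N → ℝ → ℝ, IsSolSys N p q u₀ v₀ T u' v' →
    ∀ t : ℝ, 0 < t → ENNReal.ofReal t < T →
      (∀ᵐ x ∂(volume : Measure (Euc N)), u x t ≤ u' x t) ∧
      (∀ᵐ x ∂(volume : Measure (Euc N)), v x t ≤ v' x t)

/-- Regularity requirements on a scalar function `w`. -/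
def ScalarRegular (N : ℕ) (T : ℝ≥0∞) (w : Euc N → ℝ → ℝ) : Prop :=
  (∀ x t, 0 ≤ w x t) ∧ Measurable (Function.uncurry w) ∧ LocBdd N T w

/-- The Duhamel identity for the scalar problem (E) `∂ₜw = Δw + α w^A + β w^B` at time `t`. -/
def DuhamelScalar (N : ℕ) (α β A B : ℝ) (w₀ : Euc N → ℝ) (w : Euc N → ℝ → ℝ) (t : ℝ) : Prop :=
  ∀ᵐ x ∂(volume : Measure (Euc N)), ENNReal.ofReal (w x t) =
    heatS N t w₀ x +
      ∫⁻ s in Set.Ioo 0 t, heatS N (t - s) (fun y => α * w y s ^ A + β * w y s ^ B) x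

/-- The Duhamel inequality (`≥`, with finite left-hand side) for the scalar problem (E). -/
def DuhamelSuperScalar (N : ℕ) (α β A B : ℝ) (w₀ : Euc N → ℝ) (w : Euc N → ℝ → ℝ)
    (t : ℝ) : Prop :=
  ∀ᵐ x ∂(volume : Measure (Euc N)),
    heatS N t w₀ x +
        (∫⁻ s in Set.Ioo 0 t, heatS N (t - s) (fun y => α * w y s ^ A + β * w y s ^ B) x) ≤
      ENNReal.ofReal (w x t)

/-- `w` is a solution of the scalar problem (E) on `ℝ^N × (0,T)`. -/
def IsSolScalar (N : ℕ) (α β A B : ℝ) (w₀ : Euc N → ℝ) (T : ℝ≥0∞)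
    (w : Euc N → ℝ → ℝ) : Prop :=
  ScalarRegular N T w ∧
  ∀ t : ℝ, 0 < t → ENNReal.ofReal t < T → DuhamelScalar N α β A B w₀ w t

/-- `w` is a supersolution of the scalar problem (E) on `ℝ^N × (0,T)`. -/
def IsSuperScalar (N : ℕ) (α β A B : ℝ) (w₀ : Euc N → ℝ) (T : ℝ≥0∞)
    (w : Euc N → ℝ → ℝ) : Prop :=
  ScalarRegular N T w ∧
  ∀ t : ℝ, 0 < t → ENNReal.ofReal t < T → DuhamelSuperScalar N α β A B w₀ w t

/-- The Duhamel identities for the strongly coupled system (SC)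
`∂ₜu = Δu + u^{p₁} v^{p₂}`, `∂ₜv = Δv + u^{q₁} v^{q₂}` at time `t`. -/
def DuhamelSC (N : ℕ) (p₁ p₂ q₁ q₂ : ℝ) (u₀ v₀ : Euc N → ℝ) (u v : Euc N → ℝ → ℝ)
    (t : ℝ) : Prop :=
  (∀ᵐ x ∂(volume : Measure (Euc N)), ENNReal.ofReal (u x t) =
      heatS N t u₀ x +
        ∫⁻ s in Set.Ioo 0 t, heatS N (t - s) (fun y => u y s ^ p₁ * v y s ^ p₂) x) ∧
  (∀ᵐ x ∂(volume : Measure (Euc N)), ENNReal.ofReal (v x t) =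
      heatS N t v₀ x +
        ∫⁻ s in Set.Ioo 0 t, heatS N (t - s) (fun y => u y s ^ q₁ * v y s ^ q₂) x)

/-- `(u,v)` is a solution of the strongly coupled system (SC) on `ℝ^N × (0,T)`. -/
def IsSolSC (N : ℕ) (p₁ p₂ q₁ q₂ : ℝ) (u₀ v₀ : Euc N → ℝ) (T : ℝ≥0∞)
    (u v : Euc N → ℝ → ℝ) : Prop :=
  PairRegular N T u v ∧
  ∀ t : ℝ, 0 < t → ENNReal.ofReal t < T → DuhamelSC N p₁ p₂ q₁ q₂ u₀ v₀ u v t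

/-!
Put `w = S(t)W₀`. Jensen's inequality gives `S(t)u₀ ≤ w^{1/r₁}` and `S(t)v₀ ≤ w^{1/r₂}`, so
`(2 w^{1/r₁}, 2 w^{1/r₂})` is a natural candidate for a supersolution. To absorb the Duhamel term
of `v^p`, split `p/r₂ = P/N + 1/r₁` and bound
`S(t-s) w(s)^{p/r₂} ≤ ‖w(s)‖_∞^{P/N} S(t-s) w(s)^{1/r₁} ≤ ‖w(s)‖_∞^{P/N} w(t)^{1/r₁}`
by Jensen's inequality and the semigroup law; the smallness of `∫₀ᵀ ‖w(s)‖_∞^{P/N} ds` does the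
rest. The Picard iterates from `(0, 0)` increase, stay below the supersolution, and converge to a
solution by monotone convergence. Only the Markov semigroup property of the heat kernel enters.
-/

open ProbabilityTheory Set

section Jensen

variable {X : Type*} [MeasurableSpace X] {μ : Measure X}

lemma lintegral_rpow_le_rpow_lintegral [IsProbabilityMeasure μ] {f : X → ℝ≥0∞}
    (hf : AEMeasurable f μ) {θ : ℝ} (hθ₀ : 0 ≤ θ) (hθ₁ : θ ≤ 1) :
    ∫⁻ y, f y ^ θ ∂μ ≤ (∫⁻ y, f y ∂μ) ^ θ := by
  simpa using ENNReal.lintegral_mul_norm_pow_le hf (aemeasurable_const (b := 1)) hθ₀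
    (sub_nonneg.2 hθ₁) (add_sub_cancel θ 1)

end Jensen

section Kernel

variable {X : Type*} [MeasurableSpace X]

/-- The semigroup `S(t)f` attached to a transition kernel, as a function of `z = (x, t)`. -/
def evolution (κ : Kernel (X × ℝ) X) (f : X → ℝ≥0∞) (z : X × ℝ) : ℝ≥0∞ :=
  ∫⁻ y, f y ∂κ z

/-- `κ (x, t)`, `t > 0`, is the law at time `t` of a Markov process started at `x`: it is a
probability measure, absolutely continuous with respect to the reference measure `μ`, and the
family satisfies the Chapman–Kolmogorov equation. Nothing is required of `κ` at times `t ≤ 0`. -/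
structure IsMarkovSemigroup (κ : Kernel (X × ℝ) X) (μ : Measure X) : Prop where
  isProbabilityMeasure : ∀ x {t : ℝ}, 0 < t → IsProbabilityMeasure (κ (x, t))
  absolutelyContinuous : ∀ x {t : ℝ}, 0 < t → κ (x, t) ≪ μ
  evolution_evolution : ∀ {f : X → ℝ≥0∞}, Measurable f → ∀ x {s t : ℝ}, 0 < s → 0 < t →
    evolution κ (fun y => evolution κ f (y, t)) (x, s) = evolution κ f (x, s + t)

/-- The mild (Duhamel) solution `S(t)f + ∫₀ᵗ S(t - s)G(s) ds` of the linear problem with initial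
datum `f` and source `G`, as a function of `z = (x, t)`. -/
def duhamel (κ : Kernel (X × ℝ) X) (f : X → ℝ≥0∞) (G : X × ℝ → ℝ≥0∞) (z : X × ℝ) : ℝ≥0∞ :=
  evolution κ f z + ∫⁻ s in Ioo 0 z.2, evolution κ (fun y => G (y, s)) (z.1, z.2 - s)

variable {κ : Kernel (X × ℝ) X} {f g : X → ℝ≥0∞}

@[fun_prop]
lemma measurable_evolution (hf : Measurable f) : Measurable (evolution κ f) :=
  hf.lintegral_kernel

lemma evolution_mono : Monotone (evolution κ) :=
  fun _ _ h _ => lintegral_mono h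

section Duhamel

variable {G G' : X × ℝ → ℝ≥0∞}

lemma measurable_evolution_slice [IsSFiniteKernel κ] (hG : Measurable G) :
    Measurable fun w : (X × ℝ) × ℝ =>
      evolution κ (fun y => G (y, w.2)) (w.1.1, w.1.2 - w.2) := by
  have hshift : Measurable fun w : (X × ℝ) × ℝ => (w.1.1, w.1.2 - w.2) := by fun_prop
  have hslice : Measurable (Function.uncurry fun (w : (X × ℝ) × ℝ) y => G (y, w.2)) := by
    unfold Function.uncurry
    fun_prop
  exact Measurable.lintegral_kernel_prod_right (κ := κ.comap _ hshift) hslice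

lemma measurable_duhamel [IsSFiniteKernel κ] (hf : Measurable f) (hG : Measurable G) :
    Measurable (duhamel κ f G) := by
  have hS : MeasurableSet {w : (X × ℝ) × ℝ | w.2 ∈ Ioo 0 w.1.2} :=
    (measurableSet_lt measurable_const measurable_snd).inter
      (measurableSet_lt measurable_snd measurable_fst.snd)
  refine (measurable_evolution hf).add ?_
  simp_rw [← lintegral_indicator measurableSet_Ioo]
  exact ((measurable_evolution_slice hG).indicator hS).lintegral_prod_right'

lemma duhamel_le_duhamel {z : X × ℝ} (h : ∀ y, ∀ s ∈ Ioo 0 z.2, G (y, s) ≤ G' (y, s)) :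
    duhamel κ f G z ≤ duhamel κ f G' z :=
  add_le_add_right (setLIntegral_mono' measurableSet_Ioo fun s hs =>
    evolution_mono (fun y => h y s hs) _) _

lemma evolution_iSup {F : ℕ → X → ℝ≥0∞} (hF : ∀ n, Measurable (F n)) (hmono : Monotone F)
    (z : X × ℝ) : evolution κ (fun y => ⨆ n, F n y) z = ⨆ n, evolution κ (F n) z :=
  lintegral_iSup hF hmono

lemma duhamel_iSup [IsSFiniteKernel κ] {F : ℕ → X × ℝ → ℝ≥0∞} (hF : ∀ n, Measurable (F n))
    (hmono : Monotone F) (z : X × ℝ) :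
    duhamel κ f (fun w => ⨆ n, F n w) z = ⨆ n, duhamel κ f (F n) z := by
  have hmeas (n : ℕ) : Measurable fun s => evolution κ (fun y => F n (y, s)) (z.1, z.2 - s) :=
    (measurable_evolution_slice (hF n)).comp measurable_prodMk_left
  have hslice (s : ℝ) : Monotone fun n y => F n (y, s) := fun _ _ h y => hmono h (y, s)
  have hevol (s : ℝ) : evolution κ (fun y => ⨆ n, F n (y, s)) (z.1, z.2 - s) =
      ⨆ n, evolution κ (fun y => F n (y, s)) (z.1, z.2 - s) :=
    evolution_iSup (fun n => (hF n).comp measurable_prodMk_right) (hslice s) _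
  simp only [duhamel, hevol]
  rw [lintegral_iSup hmeas fun _ _ h s => evolution_mono (hslice s h) _, ENNReal.add_iSup]

end Duhamel

section Picard

variable {p q : ℝ}

/-- The map whose fixed points are the mild solutions `(u, v)` of
`∂ₜu = Lu + v^p`, `∂ₜv = Lv + u^q` with initial data `(f, g)`. -/
def picardMap (κ : Kernel (X × ℝ) X) (p q : ℝ) (f g : X → ℝ≥0∞)
    (W : (X × ℝ → ℝ≥0∞) × (X × ℝ → ℝ≥0∞)) : (X × ℝ → ℝ≥0∞) × (X × ℝ → ℝ≥0∞) :=
  (duhamel κ f fun z => W.2 z ^ p, duhamel κ g fun z => W.1 z ^ q)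

/-- The supremum of the Picard iterates started at `(0, 0)`, which is the minimal mild solution
with values in `[0, ∞]`. -/
def picardLimit (κ : Kernel (X × ℝ) X) (p q : ℝ) (f g : X → ℝ≥0∞) :
    (X × ℝ → ℝ≥0∞) × (X × ℝ → ℝ≥0∞) :=
  ⨆ n, (picardMap κ p q f g)^[n] ⊥

lemma picardLimit_eq : picardLimit κ p q f g =
    (fun z => ⨆ n, ((picardMap κ p q f g)^[n] ⊥).1 z,
      fun z => ⨆ n, ((picardMap κ p q f g)^[n] ⊥).2 z) := by
  ext <;> simp only [picardLimit, Prod.fst_iSup, Prod.snd_iSup, iSup_apply]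

lemma picardMap_le_picardMap (hp : 0 ≤ p) (hq : 0 ≤ q)
    {W W' : (X × ℝ → ℝ≥0∞) × (X × ℝ → ℝ≥0∞)} {z : X × ℝ}
    (h : ∀ y, ∀ s ∈ Ioo 0 z.2, W.1 (y, s) ≤ W'.1 (y, s) ∧ W.2 (y, s) ≤ W'.2 (y, s)) :
    (picardMap κ p q f g W).1 z ≤ (picardMap κ p q f g W').1 z ∧
      (picardMap κ p q f g W).2 z ≤ (picardMap κ p q f g W').2 z := by
  dsimp only [picardMap]
  exact ⟨duhamel_le_duhamel fun y s hs => ENNReal.rpow_le_rpow (h y s hs).2 hp,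
    duhamel_le_duhamel fun y s hs => ENNReal.rpow_le_rpow (h y s hs).1 hq⟩

lemma monotone_picardMap (hp : 0 ≤ p) (hq : 0 ≤ q) : Monotone (picardMap κ p q f g) := by
  intro W W' h
  have hz (z : X × ℝ) := picardMap_le_picardMap (κ := κ) (f := f) (g := g) hp hq (z := z)
    fun y s _ => ⟨h.1 (y, s), h.2 (y, s)⟩
  exact ⟨fun z => (hz z).1, fun z => (hz z).2⟩

lemma monotone_picardMap_iterate (hp : 0 ≤ p) (hq : 0 ≤ q) :
    Monotone fun n => (picardMap κ p q f g)^[n] ⊥ :=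
  (monotone_picardMap hp hq).monotone_iterate_of_le_map bot_le

lemma measurable_picardMap_iterate [IsSFiniteKernel κ] (hf : Measurable f) (hg : Measurable g)
    (n : ℕ) : Measurable ((picardMap κ p q f g)^[n] ⊥).1 ∧
      Measurable ((picardMap κ p q f g)^[n] ⊥).2 := by
  induction n with
  | zero => exact ⟨measurable_const, measurable_const⟩
  | succ n ih =>
    rw [Function.iterate_succ_apply']
    exact ⟨measurable_duhamel hf (ih.2.pow_const p), measurable_duhamel hg (ih.1.pow_const q)⟩

lemma measurable_picardLimit [IsSFiniteKernel κ] (hf : Measurable f) (hg : Measurable g) :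
    Measurable (picardLimit κ p q f g).1 ∧ Measurable (picardLimit κ p q f g).2 := by
  rw [picardLimit_eq]
  exact ⟨.iSup fun n => (measurable_picardMap_iterate hf hg n).1,
    .iSup fun n => (measurable_picardMap_iterate hf hg n).2⟩

lemma iSup_rpow {ι : Sort*} [Nonempty ι] (F : ι → ℝ≥0∞) (hp : 0 ≤ p) :
    (⨆ i, F i) ^ p = ⨆ i, F i ^ p :=
  (ENNReal.monotone_rpow_of_nonneg hp).map_ciSup_of_continuousAt
    ENNReal.continuous_rpow_const.continuousAt

lemma duhamel_iSup_rpow [IsSFiniteKernel κ] (hp : 0 ≤ p) {F : ℕ → X × ℝ → ℝ≥0∞}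
    (hF : ∀ n, Measurable (F n)) (hmono : Monotone F) :
    duhamel κ f (fun z => (⨆ n, F n) z ^ p) = ⨆ n, duhamel κ f fun z => F n z ^ p := by
  ext z
  simp only [iSup_apply, iSup_rpow _ hp]
  exact duhamel_iSup (fun n => (hF n).pow_const p)
    (fun _ _ h w => ENNReal.rpow_le_rpow (hmono h w) hp) z

lemma picardMap_picardLimit [IsSFiniteKernel κ] (hp : 0 ≤ p) (hq : 0 ≤ q) (hf : Measurable f)
    (hg : Measurable g) :
    picardMap κ p q f g (picardLimit κ p q f g) = picardLimit κ p q f g := by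
  set W := fun n => (picardMap κ p q f g)^[n] ⊥
  have hW : Monotone W := monotone_picardMap_iterate hp hq
  have hmeas (n : ℕ) := measurable_picardMap_iterate (κ := κ) (p := p) (q := q) hf hg n
  calc picardMap κ p q f g (⨆ n, W n) = ⨆ n, picardMap κ p q f g (W n) := by
        refine Prod.ext ?_ ?_
        · simp only [picardMap, Prod.snd_iSup, Prod.fst_iSup]
          exact duhamel_iSup_rpow hp (fun n => (hmeas n).2) fun _ _ h => (hW h).2
        · simp only [picardMap, Prod.snd_iSup, Prod.fst_iSup]
          exact duhamel_iSup_rpow hq (fun n => (hmeas n).1) fun _ _ h => (hW h).1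
    _ = ⨆ n, W (n + 1) := by simp only [W, Function.iterate_succ_apply']
    _ = ⨆ n, W n := hW.iSup_nat_add 1

lemma picardLimit_le_of_picardMap_le (hp : 0 ≤ p) (hq : 0 ≤ q) {T : ℝ}
    {W : (X × ℝ → ℝ≥0∞) × (X × ℝ → ℝ≥0∞)}
    (hW : ∀ x, ∀ t ∈ Ioc 0 T, (picardMap κ p q f g W).1 (x, t) ≤ W.1 (x, t) ∧
      (picardMap κ p q f g W).2 (x, t) ≤ W.2 (x, t)) (x : X) {t : ℝ} (ht : t ∈ Ioc 0 T) :
    (picardLimit κ p q f g).1 (x, t) ≤ W.1 (x, t) ∧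
      (picardLimit κ p q f g).2 (x, t) ≤ W.2 (x, t) := by
  have hiter (n : ℕ) : ∀ x, ∀ t ∈ Ioc 0 T,
      ((picardMap κ p q f g)^[n] ⊥).1 (x, t) ≤ W.1 (x, t) ∧
        ((picardMap κ p q f g)^[n] ⊥).2 (x, t) ≤ W.2 (x, t) := by
    induction n with
    | zero => exact fun _ _ _ => ⟨zero_le, zero_le⟩
    | succ n ih =>
      intro x t ht
      have hstep := picardMap_le_picardMap (κ := κ) (f := f) (g := g) hp hq (z := (x, t))
        fun y s hs => ih y s ⟨hs.1, hs.2.le.trans ht.2⟩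
      rw [Function.iterate_succ_apply']
      exact ⟨hstep.1.trans (hW x t ht).1, hstep.2.trans (hW x t ht).2⟩
  rw [picardLimit_eq]
  exact ⟨iSup_le fun n => (hiter n x t ht).1, iSup_le fun n => (hiter n x t ht).2⟩

end Picard

namespace IsMarkovSemigroup

variable {μ : Measure X} {a p q α β T : ℝ} {c : ℝ≥0∞} {w : X → ℝ≥0∞}

lemma evolution_rpow_le (hκ : IsMarkovSemigroup κ μ) (hw : Measurable w) (hα₀ : 0 ≤ α)
    (hα₁ : α ≤ 1) (x : X) {t : ℝ} (ht : 0 < t) :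
    evolution κ (fun y => w y ^ α) (x, t) ≤ evolution κ w (x, t) ^ α :=
  have := hκ.isProbabilityMeasure x ht
  lintegral_rpow_le_rpow_lintegral hw.aemeasurable hα₀ hα₁

lemma evolution_barrier_rpow_le (hκ : IsMarkovSemigroup κ μ) (hw : Measurable w) (hp : 0 ≤ p)
    (ha : 0 ≤ a) (hα₀ : 0 ≤ α) (hα₁ : α ≤ 1) (hexp : β * p = a + α) (x : X) {s t : ℝ}
    (hs : 0 < s) (hst : s < t) :
    evolution κ (fun y => (c * evolution κ w (y, s) ^ β) ^ p) (x, t - s) ≤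
      c ^ p * essSup (fun y => evolution κ w (y, s)) μ ^ a * evolution κ w (x, t) ^ α := by
  have hts : 0 < t - s := sub_pos.2 hst
  set ws := fun y => evolution κ w (y, s)
  have hws : Measurable ws := (measurable_evolution hw).comp measurable_prodMk_right
  have hle : ∀ᵐ y ∂κ (x, t - s),
      (c * ws y ^ β) ^ p ≤ c ^ p * essSup ws μ ^ a * ws y ^ α := by
    filter_upwards [hκ.absolutelyContinuous x hts (ENNReal.ae_le_essSup ws)] with y hy
    calc (c * ws y ^ β) ^ p = c ^ p * (ws y ^ a * ws y ^ α) := by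
          rw [ENNReal.mul_rpow_of_nonneg _ _ hp, ← ENNReal.rpow_mul, hexp,
            ENNReal.rpow_add_of_nonneg _ _ ha hα₀]
      _ ≤ c ^ p * essSup ws μ ^ a * ws y ^ α := by
          rw [mul_assoc]
          gcongr
  calc evolution κ (fun y => (c * ws y ^ β) ^ p) (x, t - s)
      ≤ c ^ p * essSup ws μ ^ a * evolution κ (fun y => ws y ^ α) (x, t - s) :=
        (lintegral_mono_ae hle).trans_eq (lintegral_const_mul _ (hws.pow_const α))
    _ ≤ c ^ p * essSup ws μ ^ a * evolution κ ws (x, t - s) ^ α := by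
        gcongr
        exact hκ.evolution_rpow_le hws hα₀ hα₁ x hts
    _ = c ^ p * essSup ws μ ^ a * evolution κ w (x, t) ^ α := by
        rw [hκ.evolution_evolution hw x hts hs, sub_add_cancel]

lemma duhamel_barrier_le (hκ : IsMarkovSemigroup κ μ) (hw : Measurable w) (hp : 0 ≤ p)
    (ha : 0 ≤ a) (hα₀ : 0 ≤ α) (hα₁ : α ≤ 1) (hexp : β * p = a + α) (hc : c ≠ ∞)
    (hfw : ∀ y, f y ≤ w y ^ α)
    (hsmall : 1 + c ^ p * ∫⁻ s in Ioo 0 T, essSup (fun y => evolution κ w (y, s)) μ ^ a ≤ c)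
    (x : X) {t : ℝ} (ht : t ∈ Ioc 0 T) :
    duhamel κ f (fun z => (c * evolution κ w z ^ β) ^ p) (x, t) ≤
      c * evolution κ w (x, t) ^ α := by
  set M := fun s => essSup (fun y => evolution κ w (y, s)) μ
  set A := evolution κ w (x, t) ^ α
  by_cases hA : A = ∞
  · have hc₀ : c ≠ 0 := (one_pos.trans_le (le_self_add.trans hsmall)).ne'
    rw [hA, ENNReal.mul_top hc₀]
    exact le_top
  calc duhamel κ f (fun z => (c * evolution κ w z ^ β) ^ p) (x, t)
      ≤ A + ∫⁻ s in Ioo 0 t, c ^ p * M s ^ a * A :=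
        add_le_add
          ((evolution_mono hfw _).trans (hκ.evolution_rpow_le hw hα₀ hα₁ x ht.1))
          (setLIntegral_mono' measurableSet_Ioo fun s hs =>
            hκ.evolution_barrier_rpow_le hw hp ha hα₀ hα₁ hexp x hs.1 hs.2)
    _ = (1 + c ^ p * ∫⁻ s in Ioo 0 t, M s ^ a) * A := by
        rw [lintegral_mul_const' _ _ hA,
          lintegral_const_mul' _ _ (ENNReal.rpow_ne_top_of_nonneg hp hc)]
        ring
    _ ≤ (1 + c ^ p * ∫⁻ s in Ioo 0 T, M s ^ a) * A := by
        gcongr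
        exact ht.2
    _ ≤ c * A := by gcongr

lemma picardLimit_le {b : ℝ} (hκ : IsMarkovSemigroup κ μ) (hw : Measurable w) (hp : 0 ≤ p)
    (hq : 0 ≤ q) (ha : 0 ≤ a) (hb : 0 ≤ b) (hα : α ∈ Icc 0 1) (hβ : β ∈ Icc 0 1)
    (hexpp : β * p = a + α) (hexpq : α * q = b + β) (hc : c ≠ ∞)
    (hfw : ∀ y, f y ≤ w y ^ α) (hgw : ∀ y, g y ≤ w y ^ β)
    (hsmallp : 1 + c ^ p * ∫⁻ s in Ioo 0 T, essSup (fun y => evolution κ w (y, s)) μ ^ a ≤ c)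
    (hsmallq : 1 + c ^ q * ∫⁻ s in Ioo 0 T, essSup (fun y => evolution κ w (y, s)) μ ^ b ≤ c)
    (x : X) {t : ℝ} (ht : t ∈ Ioc 0 T) :
    (picardLimit κ p q f g).1 (x, t) ≤ c * evolution κ w (x, t) ^ α ∧
      (picardLimit κ p q f g).2 (x, t) ≤ c * evolution κ w (x, t) ^ β :=
  picardLimit_le_of_picardMap_le (f := f) (g := g) hp hq
    (W := (fun z => c * evolution κ w z ^ α, fun z => c * evolution κ w z ^ β))
    (fun x _ ht => ⟨hκ.duhamel_barrier_le hw hp ha hα.1 hα.2 hexpp hc hfw hsmallp x ht,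
      hκ.duhamel_barrier_le hw hq hb hβ.1 hβ.2 hexpq hc hgw hsmallq x ht⟩) x ht

end IsMarkovSemigroup

end Kernel

section HeatKernel

variable {E : Type*} [NormedAddCommGroup E] [InnerProductSpace ℝ E]

section Density

/-- The Gauss–Weierstrass density `(4πt)^(-d/2) exp(-|z|²/(4t))` on a `d`-dimensional space. -/
def heatDensity (t : ℝ) (z : E) : ℝ :=
  (4 * Real.pi * t) ^ (-(Module.finrank ℝ E : ℝ) / 2) * Real.exp (-‖z‖ ^ 2 / (4 * t))

lemma heatDensity_nonneg {t : ℝ} (ht : 0 < t) (z : E) : 0 ≤ heatDensity t z := by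
  unfold heatDensity
  positivity

-- Completing the square in `z`: the minimum is at the convex combination of `x` and `y`.
lemma norm_sub_sq_div_add_norm_sub_sq_div {a b : ℝ} (ha : 0 < a) (hb : 0 < b) (x y z : E) :
    ‖x - z‖ ^ 2 / a + ‖z - y‖ ^ 2 / b = ‖x - y‖ ^ 2 / (a + b) +
      ‖z - ((b / (a + b)) • x + (a / (a + b)) • y)‖ ^ 2 / (a * b / (a + b)) := by
  have hab : a + b ≠ 0 := by positivity
  have hcenter : z - ((b / (a + b)) • x + (a / (a + b)) • y) =
      (a / (a + b)) • (z - y) - (b / (a + b)) • (x - z) := by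
    match_scalars <;> field_simp
    ring
  rw [hcenter, ← sub_add_sub_cancel x z y, norm_sub_sq_real ((a / (a + b)) • (z - y)),
    norm_add_sq_real, norm_smul, norm_smul, inner_smul_left, inner_smul_right,
    real_inner_comm (x - z),
    Real.norm_of_nonneg (by positivity), Real.norm_of_nonneg (by positivity), conj_trivial]
  field_simp
  ring

lemma heatDensity_mul_heatDensity {s t : ℝ} (hs : 0 < s) (ht : 0 < t) (x y z : E) :
    heatDensity s (x - z) * heatDensity t (z - y) = heatDensity (s + t) (x - y) *
      heatDensity (s * t / (s + t)) (z - ((t / (s + t)) • x + (s / (s + t)) • y)) := by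
  have hprefactor (m : ℝ) : (4 * Real.pi * s) ^ m * (4 * Real.pi * t) ^ m =
      (4 * Real.pi * (s + t)) ^ m * (4 * Real.pi * (s * t / (s + t))) ^ m := by
    rw [← Real.mul_rpow (by positivity) (by positivity),
      ← Real.mul_rpow (by positivity) (by positivity)]
    congr 1
    field_simp
  have hsquare := norm_sub_sq_div_add_norm_sub_sq_div hs ht x y z
  simp only [heatDensity]
  rw [mul_mul_mul_comm, hprefactor, mul_mul_mul_comm (_ ^ _) (Real.exp _), ← Real.exp_add,
    ← Real.exp_add]
  congr 2
  simp only [mul_comm (4 : ℝ), ← div_div, neg_div, ← neg_add, ← add_div]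
  rw [hsquare]

variable [MeasurableSpace E] [BorelSpace E]

@[fun_prop]
lemma measurable_heatDensity [SecondCountableTopology E] :
    Measurable fun w : ℝ × E => heatDensity w.1 w.2 := by
  unfold heatDensity
  fun_prop

lemma lintegral_heatDensity [FiniteDimensional ℝ E] {t : ℝ} (ht : 0 < t) :
    ∫⁻ z : E, ENNReal.ofReal (heatDensity t z) = 1 := by
  have hgauss := GaussianFourier.integral_rexp_neg_mul_sq_norm (V := E)
    (b := 1 / (4 * t)) (by positivity)
  have hnormalized : ∫ z : E, heatDensity t z = 1 := by
    have hexp (z : E) : -‖z‖ ^ 2 / (4 * t) = -(1 / (4 * t)) * ‖z‖ ^ 2 := by ring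
    have hbase : Real.pi / (1 / (4 * t)) = 4 * Real.pi * t := by field_simp
    simp only [heatDensity, hexp]
    rw [integral_const_mul, hgauss, hbase, ← Real.rpow_add (by positivity), neg_div,
      neg_add_cancel, Real.rpow_zero]
  have hint : Integrable (heatDensity t : E → ℝ) :=
    .of_integral_ne_zero (hnormalized ▸ one_ne_zero)
  rw [← ofReal_integral_eq_lintegral_ofReal hint (.of_forall fun z => heatDensity_nonneg ht z),
    hnormalized, ENNReal.ofReal_one]

end Density

variable [FiniteDimensional ℝ E] [MeasurableSpace E] [BorelSpace E]

/-- The heat kernel as a transition kernel: `heatKernel E (x, t)` has density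
`y ↦ heatDensity t (x - y)`. -/
def heatKernel (E : Type*) [NormedAddCommGroup E] [InnerProductSpace ℝ E]
    [FiniteDimensional ℝ E] [MeasurableSpace E] [BorelSpace E] : Kernel (E × ℝ) E :=
  (Kernel.const (E × ℝ) volume).withDensity fun z y =>
    ENNReal.ofReal (heatDensity z.2 (z.1 - y))

instance : IsSFiniteKernel (heatKernel E) :=
  Kernel.IsSFiniteKernel.withDensity _ fun _ _ => ENNReal.ofReal_ne_top

lemma evolution_heatKernel {f : E → ℝ≥0∞} (hf : Measurable f) (x : E) (t : ℝ) :
    evolution (heatKernel E) f (x, t) =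
      ∫⁻ y, ENNReal.ofReal (heatDensity t (x - y)) * f y := by
  have hdensity : Measurable (Function.uncurry fun (z : E × ℝ) y =>
      ENNReal.ofReal (heatDensity z.2 (z.1 - y))) := by
    unfold Function.uncurry
    fun_prop
  exact Kernel.lintegral_withDensity _ hdensity (x, t) hf

lemma evolution_heatKernel_evolution {f : E → ℝ≥0∞} (hf : Measurable f) (x : E) {s t : ℝ}
    (hs : 0 < s) (ht : 0 < t) :
    evolution (heatKernel E) (fun y => evolution (heatKernel E) f (y, t)) (x, s) =
      evolution (heatKernel E) f (x, s + t) := by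
  have hmeas : Measurable fun y => evolution (heatKernel E) f (y, t) := by fun_prop
  have hc : 0 < s * t / (s + t) := by positivity
  rw [evolution_heatKernel hmeas]
  simp only [evolution_heatKernel hf]
  set k : ℝ → E → ℝ≥0∞ := fun t z => ENNReal.ofReal (heatDensity t z) with hk
  have hkernel (y z : E) : k s (x - z) * k t (z - y) = k (s + t) (x - y) *
      k (s * t / (s + t)) (z - ((t / (s + t)) • x + (s / (s + t)) • y)) := by
    simp only [hk, ← ENNReal.ofReal_mul (heatDensity_nonneg hs _),
      ← ENNReal.ofReal_mul (heatDensity_nonneg (add_pos hs ht) _),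
      heatDensity_mul_heatDensity hs ht]
  calc ∫⁻ z, k s (x - z) * ∫⁻ y, k t (z - y) * f y
      = ∫⁻ z, ∫⁻ y, k s (x - z) * k t (z - y) * f y := by
        simp_rw [mul_assoc]
        exact lintegral_congr fun z => (lintegral_const_mul _ (by fun_prop)).symm
    _ = ∫⁻ y, ∫⁻ z, k s (x - z) * k t (z - y) * f y :=
        lintegral_lintegral_swap (by fun_prop)
    _ = ∫⁻ y, k (s + t) (x - y) * f y := by
        refine lintegral_congr fun y => ?_
        rw [lintegral_mul_const _ (by fun_prop)]
        simp_rw [hkernel]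
        rw [lintegral_const_mul _ (by fun_prop), lintegral_sub_right_eq_self (k _),
          lintegral_heatDensity hc, mul_one]

lemma isMarkovSemigroup_heatKernel : IsMarkovSemigroup (heatKernel E) volume where
  isProbabilityMeasure x t ht := by
    constructor
    rw [← lintegral_one, ← evolution, evolution_heatKernel measurable_const]
    simp only [mul_one]
    rw [lintegral_sub_left_eq_self fun z => ENNReal.ofReal (heatDensity t z),
      lintegral_heatDensity ht]
  absolutelyContinuous x t _ := Kernel.withDensity_absolutelyContinuous _ (x, t)
  evolution_evolution := evolution_heatKernel_evolution

end HeatKernel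

section HeatSystem

lemma ofReal_two_rpow (r : ℝ) : ENNReal.ofReal (2 ^ r) = 2 ^ r := by
  rw [← ENNReal.ofReal_rpow_of_pos two_pos, ENNReal.ofReal_ofNat]

lemma ofReal_le_rpow_add_rpow_one_div {a b r : ℝ} (ha : 0 ≤ a) (hb : 0 ≤ b) (hr : 0 < r) :
    ENNReal.ofReal a ≤ ENNReal.ofReal (a ^ r + b) ^ (1 / r) := by
  rw [ENNReal.ofReal_rpow_of_nonneg (by positivity) (by positivity)]
  refine ENNReal.ofReal_le_ofReal ?_
  calc a = (a ^ r) ^ (1 / r) := by rw [one_div, Real.rpow_rpow_inv ha hr.ne']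
    _ ≤ (a ^ r + b) ^ (1 / r) := by gcongr; exact le_add_of_nonneg_right hb

lemma ofReal_toReal_rpow_le {F G c : ℝ≥0∞} {r : ℝ} (hr : 0 < r) (h : F ≤ c * G ^ (1 / r)) :
    ENNReal.ofReal (F.toReal ^ r) ≤ c ^ r * G := by
  calc ENNReal.ofReal (F.toReal ^ r) = ENNReal.ofReal F.toReal ^ r :=
        (ENNReal.ofReal_rpow_of_nonneg ENNReal.toReal_nonneg hr.le).symm
    _ ≤ (c * G ^ (1 / r)) ^ r := by gcongr; exact ENNReal.ofReal_toReal_le.trans h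
    _ = c ^ r * G := by
        rw [ENNReal.mul_rpow_of_nonneg _ _ hr.le, one_div, ENNReal.rpow_inv_rpow hr.ne']

lemma ofReal_toReal_rpow_add_toReal_rpow_le {F₁ F₂ G : ℝ≥0∞} {r₁ r₂ : ℝ} (hr₁ : 0 < r₁)
    (hr₂ : 0 < r₂) (h₁ : F₁ ≤ 2 * G ^ (1 / r₁)) (h₂ : F₂ ≤ 2 * G ^ (1 / r₂)) :
    ENNReal.ofReal (F₁.toReal ^ r₁ + F₂.toReal ^ r₂) ≤
      ENNReal.ofReal (2 ^ r₁ + 2 ^ r₂) * G := by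
  rw [ENNReal.ofReal_add (by positivity) (by positivity),
    ENNReal.ofReal_add (by positivity) (by positivity), add_mul, ofReal_two_rpow,
    ofReal_two_rpow]
  exact add_le_add (ofReal_toReal_rpow_le hr₁ h₁) (ofReal_toReal_rpow_le hr₂ h₂)

lemma one_add_two_rpow_mul_le_two {p : ℝ} {I : ℝ≥0∞} (hI : I ≤ ENNReal.ofReal (2 ^ (-p))) :
    1 + 2 ^ p * I ≤ 2 := by
  calc 1 + 2 ^ p * I ≤ 1 + 2 ^ p * 2 ^ (-p) := by gcongr; exact hI.trans_eq (ofReal_two_rpow _)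
    _ = 2 := by
      rw [← ENNReal.rpow_add _ _ two_ne_zero ENNReal.ofNat_ne_top, add_neg_cancel,
        ENNReal.rpow_zero, one_add_one_eq_two]

variable {N : ℕ} {φ : Euc N → ℝ}

lemma heatS_eq_evolution (hφ : Measurable φ) {t : ℝ} (ht : 0 < t) (x : Euc N) :
    heatS N t φ x = evolution (heatKernel (Euc N)) (fun y => ENNReal.ofReal (φ y)) (x, t) := by
  rw [evolution_heatKernel hφ.ennreal_ofReal]
  simp only [← ENNReal.ofReal_mul (heatDensity_nonneg ht _)]
  simp only [heatDensity, finrank_euclideanSpace_fin, heatS]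

lemma heatSup_eq_essSup_evolution (hφ : Measurable φ) {t : ℝ} (ht : 0 < t) :
    heatSup N t φ =
      essSup (fun x => evolution (heatKernel (Euc N)) (fun y => ENNReal.ofReal (φ y)) (x, t))
        volume :=
  congrArg (essSup · volume) (funext (heatS_eq_evolution hφ ht))

lemma ae_mul_heatS_rpow_ne_top {t : ℝ} (hφ : heatSup N t φ < ∞) {c : ℝ≥0∞} (hc : c ≠ ∞) {a : ℝ}
    (ha : 0 ≤ a) : ∀ᵐ x, c * heatS N t φ x ^ a ≠ ∞ := by
  filter_upwards [ENNReal.ae_le_essSup (heatS N t φ)] with x hx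
  exact ENNReal.mul_ne_top hc (ENNReal.rpow_ne_top_of_nonneg ha (hx.trans_lt hφ).ne)

lemma heatS_toReal_rpow {V : Euc N → ℝ≥0∞} (hV : Measurable V) (hfin : ∀ᵐ y, V y ≠ ∞) {p : ℝ}
    (hp : 0 ≤ p) {t : ℝ} (ht : 0 < t) (x : Euc N) :
    heatS N t (fun y => (V y).toReal ^ p) x =
      evolution (heatKernel (Euc N)) (fun y => V y ^ p) (x, t) := by
  rw [heatS_eq_evolution (by fun_prop) ht]
  refine lintegral_congr_ae (isMarkovSemigroup_heatKernel.absolutelyContinuous x ht ?_)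
  filter_upwards [hfin] with y hy
  rw [← ENNReal.ofReal_rpow_of_nonneg ENNReal.toReal_nonneg hp, ENNReal.ofReal_toReal hy]

lemma ofReal_toReal_eq_heatS_add {p : ℝ} (hp : 0 ≤ p) (hφ : Measurable φ)
    {U V : Euc N × ℝ → ℝ≥0∞} (hV : Measurable V)
    (hUV : duhamel (heatKernel (Euc N)) (fun y => ENNReal.ofReal (φ y)) (fun z => V z ^ p) = U)
    {t : ℝ} (ht : 0 < t) (hUfin : ∀ᵐ x, U (x, t) ≠ ∞)
    (hVfin : ∀ s ∈ Ioo 0 t, ∀ᵐ y, V (y, s) ≠ ∞) :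
    ∀ᵐ x, ENNReal.ofReal (U (x, t)).toReal = heatS N t φ x +
      ∫⁻ s in Ioo 0 t, heatS N (t - s) (fun y => (V (y, s)).toReal ^ p) x := by
  filter_upwards [hUfin] with x hx
  rw [ENNReal.ofReal_toReal hx, ← hUV, duhamel, heatS_eq_evolution hφ ht]
  congr 1
  exact setLIntegral_congr_fun measurableSet_Ioo fun s hs =>
    (heatS_toReal_rpow (hV.comp measurable_prodMk_right) (hVfin s hs) hp (sub_pos.2 hs.2) x).symm

/-- The minimal `[0, ∞]`-valued mild solution of the system (S) with real initial data. -/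
def heatPicardLimit (N : ℕ) (p q : ℝ) (u₀ v₀ : Euc N → ℝ) :
    (Euc N × ℝ → ℝ≥0∞) × (Euc N × ℝ → ℝ≥0∞) :=
  picardLimit (heatKernel (Euc N)) p q (fun y => ENNReal.ofReal (u₀ y))
    fun y => ENNReal.ofReal (v₀ y)

variable {p q : ℝ} {u₀ v₀ : Euc N → ℝ}

lemma measurable_heatPicardLimit (hu₀ : Measurable u₀) (hv₀ : Measurable v₀) :
    Measurable (heatPicardLimit N p q u₀ v₀).1 ∧ Measurable (heatPicardLimit N p q u₀ v₀).2 :=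
  measurable_picardLimit hu₀.ennreal_ofReal hv₀.ennreal_ofReal

lemma duhamelSys_toReal_heatPicardLimit (hp : 0 ≤ p) (hq : 0 ≤ q) (hu₀ : Measurable u₀)
    (hv₀ : Measurable v₀) {t : ℝ} (ht : 0 < t)
    (hfin : ∀ s ∈ Ioc 0 t, ∀ᵐ y, (heatPicardLimit N p q u₀ v₀).1 (y, s) ≠ ∞ ∧
      (heatPicardLimit N p q u₀ v₀).2 (y, s) ≠ ∞) :
    DuhamelSys N p q u₀ v₀ (fun x t => ((heatPicardLimit N p q u₀ v₀).1 (x, t)).toReal)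
      (fun x t => ((heatPicardLimit N p q u₀ v₀).2 (x, t)).toReal) t := by
  have hmeas := measurable_heatPicardLimit (p := p) (q := q) hu₀ hv₀
  have hfix := picardMap_picardLimit (κ := heatKernel (Euc N)) hp hq hu₀.ennreal_ofReal
    hv₀.ennreal_ofReal
  exact
    ⟨ofReal_toReal_eq_heatS_add hp hu₀ hmeas.2 (congrArg Prod.fst hfix) ht
      ((hfin t ⟨ht, le_rfl⟩).mono fun _ h => h.1)
      fun s hs => (hfin s ⟨hs.1, hs.2.le⟩).mono fun _ h => h.2,
    ofReal_toReal_eq_heatS_add hq hv₀ hmeas.1 (congrArg Prod.snd hfix) ht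
      ((hfin t ⟨ht, le_rfl⟩).mono fun _ h => h.2)
      fun s hs => (hfin s ⟨hs.1, hs.2.le⟩).mono fun _ h => h.1⟩

variable {r₁ r₂ T : ℝ}

lemma heatPicardLimit_le (hr₁ : 1 ≤ r₁) (hr₂ : 1 ≤ r₂) (hP : 1 / r₁ ≤ p / r₂)
    (hQ : 1 / r₂ ≤ q / r₁) (hp : 0 ≤ p) (hq : 0 ≤ q) (hu₀ : Measurable u₀) (hv₀ : Measurable v₀)
    (hu₀_nonneg : ∀ x, 0 ≤ u₀ x) (hv₀_nonneg : ∀ x, 0 ≤ v₀ x)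
    (hsmallp : ∫⁻ s in Ioo 0 T, heatSup N s (fun y => u₀ y ^ r₁ + v₀ y ^ r₂) ^
      (p / r₂ - 1 / r₁) ≤ ENNReal.ofReal (2 ^ (-p)))
    (hsmallq : ∫⁻ s in Ioo 0 T, heatSup N s (fun y => u₀ y ^ r₁ + v₀ y ^ r₂) ^
      (q / r₁ - 1 / r₂) ≤ ENNReal.ofReal (2 ^ (-q))) (x : Euc N) {t : ℝ} (ht : t ∈ Ioc 0 T) :
    (heatPicardLimit N p q u₀ v₀).1 (x, t) ≤
        2 * heatS N t (fun y => u₀ y ^ r₁ + v₀ y ^ r₂) x ^ (1 / r₁) ∧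
      (heatPicardLimit N p q u₀ v₀).2 (x, t) ≤
        2 * heatS N t (fun y => u₀ y ^ r₁ + v₀ y ^ r₂) x ^ (1 / r₂) := by
  have hr₁_pos : 0 < r₁ := one_pos.trans_le hr₁
  have hr₂_pos : 0 < r₂ := one_pos.trans_le hr₂
  have hw : Measurable fun y => u₀ y ^ r₁ + v₀ y ^ r₂ := by fun_prop
  have hsup (θ : ℝ) := setLIntegral_congr_fun (μ := volume) (measurableSet_Ioo (a := 0) (b := T))
    fun s hs => congrArg (· ^ θ) (heatSup_eq_essSup_evolution hw hs.1)
  rw [hsup] at hsmallp hsmallq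
  rw [heatS_eq_evolution hw ht.1]
  refine isMarkovSemigroup_heatKernel.picardLimit_le hw.ennreal_ofReal hp hq
    (sub_nonneg.2 hP) (sub_nonneg.2 hQ) ⟨by positivity, div_le_one_of_le₀ hr₁ hr₁_pos.le⟩
    ⟨by positivity, div_le_one_of_le₀ hr₂ hr₂_pos.le⟩ (by ring) (by ring)
    ENNReal.ofNat_ne_top (fun y => ?_) (fun y => ?_)
    (one_add_two_rpow_mul_le_two hsmallp) (one_add_two_rpow_mul_le_two hsmallq) x ht
  · exact ofReal_le_rpow_add_rpow_one_div (hu₀_nonneg y) (Real.rpow_nonneg (hv₀_nonneg y) _)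
      hr₁_pos
  · rw [add_comm (u₀ y ^ r₁)]
    exact ofReal_le_rpow_add_rpow_one_div (hv₀_nonneg y) (Real.rpow_nonneg (hu₀_nonneg y) _)
      hr₂_pos

end HeatSystem

theorem statement11_general (N : ℕ) (p q r₁ r₂ : ℝ) (hr₁ : 1 ≤ r₁) (hr₂ : 1 ≤ r₂)
    (hP : 1 / r₁ ≤ p / r₂) (hQ : 1 / r₂ ≤ q / r₁) :
    ∃ γ₄ C : ℝ, 0 < γ₄ ∧ 0 < C ∧
      ∀ u₀ v₀ : Euc N → ℝ, Measurable u₀ → Measurable v₀ →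
        (∀ x, 0 ≤ u₀ x) → (∀ x, 0 ≤ v₀ x) →
        (∀ t : ℝ, 0 < t → heatSup N t (fun y => u₀ y ^ r₁ + v₀ y ^ r₂) < ⊤) →
        ∀ T : ℝ,
          (∫⁻ s in Ioo 0 T,
              (heatSup N s (fun y => u₀ y ^ r₁ + v₀ y ^ r₂) ^ (p / r₂ - 1 / r₁) +
                heatSup N s (fun y => u₀ y ^ r₁ + v₀ y ^ r₂) ^ (q / r₁ - 1 / r₂))) ≤
            ENNReal.ofReal γ₄ →
          ∃ u v : Euc N → ℝ → ℝ,
            (∀ x t, 0 ≤ u x t) ∧ (∀ x t, 0 ≤ v x t) ∧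
            Measurable (Function.uncurry u) ∧ Measurable (Function.uncurry v) ∧
            ∀ t : ℝ, 0 < t → t ≤ T →
              DuhamelSys N p q u₀ v₀ u v t ∧
              ∀ᵐ x ∂(volume : Measure (Euc N)),
                ENNReal.ofReal (u x t ^ r₁ + v x t ^ r₂) ≤
                  ENNReal.ofReal C * heatS N t (fun y => u₀ y ^ r₁ + v₀ y ^ r₂) x := by
  have hr₁_pos : 0 < r₁ := one_pos.trans_le hr₁
  have hr₂_pos : 0 < r₂ := one_pos.trans_le hr₂
  have hp : 0 ≤ p :=
    ((div_pos_iff_of_pos_right hr₂_pos).1 ((one_div_pos.2 hr₁_pos).trans_le hP)).le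
  have hq : 0 ≤ q :=
    ((div_pos_iff_of_pos_right hr₁_pos).1 ((one_div_pos.2 hr₂_pos).trans_le hQ)).le
  refine ⟨min (2 ^ (-p)) (2 ^ (-q)), 2 ^ r₁ + 2 ^ r₂, by positivity, by positivity, ?_⟩
  intro u₀ v₀ hu₀ hv₀ hu₀_nonneg hv₀_nonneg hsup_fin T hsmall
  have hbound (x : Euc N) (t : ℝ) (ht : t ∈ Ioc 0 T) :=
    heatPicardLimit_le (T := T) hr₁ hr₂ hP hQ hp hq hu₀ hv₀ hu₀_nonneg hv₀_nonneg
      ((lintegral_mono fun s => le_self_add).trans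
        (hsmall.trans (ENNReal.ofReal_le_ofReal (min_le_left _ _))))
      ((lintegral_mono fun s => le_add_self).trans
        (hsmall.trans (ENNReal.ofReal_le_ofReal (min_le_right _ _)))) x ht
  have hmeas := measurable_heatPicardLimit (p := p) (q := q) hu₀ hv₀
  refine ⟨fun x t => ((heatPicardLimit N p q u₀ v₀).1 (x, t)).toReal,
    fun x t => ((heatPicardLimit N p q u₀ v₀).2 (x, t)).toReal,
    fun _ _ => ENNReal.toReal_nonneg, fun _ _ => ENNReal.toReal_nonneg,
    hmeas.1.ennreal_toReal, hmeas.2.ennreal_toReal, fun t ht htT => ⟨?_, .of_forall fun x => ?_⟩⟩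
  · refine duhamelSys_toReal_heatPicardLimit hp hq hu₀ hv₀ ht fun s hs => ?_
    have hbarrier_fin {r : ℝ} (hr : 0 < r) :=
      ae_mul_heatS_rpow_ne_top (c := 2) (hsup_fin s hs.1) ENNReal.ofNat_ne_top (one_div_pos.2 hr).le
    filter_upwards [hbarrier_fin hr₁_pos, hbarrier_fin hr₂_pos] with y hU_fin hV_fin
    obtain ⟨hU, hV⟩ := hbound y s ⟨hs.1, hs.2.trans htT⟩
    exact ⟨ne_top_of_le_ne_top hU_fin hU, ne_top_of_le_ne_top hV_fin hV⟩
  · obtain ⟨hU, hV⟩ := hbound x t ⟨ht, htT⟩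
    exact ofReal_toReal_rpow_add_toReal_rpow_le hr₁_pos hr₂_pos hU hV

/-- Theorem 3.1 (iii), second part: if `P > 0` and `Q > 0` there are
`γ₄, C > 0` such that `∫₀^T (‖S(s)W₀‖_∞^{P/N} + ‖S(s)W₀‖_∞^{Q/N}) ds ≤ γ₄` for some `T > 0`
implies the existence of a solution of (S) on `ℝ^N × (0, T]` with
`0 ≤ u^{r₁} + v^{r₂} ≤ C S(t)W₀`. -/
theorem statement11 (N : ℕ) (hN : 1 ≤ N) (p q r₁ r₂ : ℝ) (hp : 0 ≤ p) (hq : 0 ≤ q)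
    (hr₁ : 1 ≤ r₁) (hr₂ : 1 ≤ r₂) (P Q : ℝ)
    (hP : P = (N : ℝ) * (p / r₂ - 1 / r₁)) (hQ : Q = (N : ℝ) * (q / r₁ - 1 / r₂))
    (hPpos : 0 < P) (hQpos : 0 < Q) :
    ∃ γ₄ C : ℝ, 0 < γ₄ ∧ 0 < C ∧
      ∀ u₀ v₀ : Euc N → ℝ, Measurable u₀ → Measurable v₀ →
        (∀ x, 0 ≤ u₀ x) → (∀ x, 0 ≤ v₀ x) →
        (∀ t : ℝ, 0 < t → heatSup N t (fun y => u₀ y ^ r₁ + v₀ y ^ r₂) < ⊤) →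
        ∀ T : ℝ, 0 < T →
          (∫⁻ s in Set.Ioo 0 T,
              (heatSup N s (fun y => u₀ y ^ r₁ + v₀ y ^ r₂) ^ (P / (N : ℝ)) +
                heatSup N s (fun y => u₀ y ^ r₁ + v₀ y ^ r₂) ^ (Q / (N : ℝ)))) ≤
            ENNReal.ofReal γ₄ →
          ∃ u v : Euc N → ℝ → ℝ,
            (∀ x t, 0 ≤ u x t) ∧ (∀ x t, 0 ≤ v x t) ∧
            Measurable (Function.uncurry u) ∧ Measurable (Function.uncurry v) ∧
            ∀ t : ℝ, 0 < t → t ≤ T →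
              DuhamelSys N p q u₀ v₀ u v t ∧
              ∀ᵐ x ∂(volume : Measure (Euc N)),
                ENNReal.ofReal (u x t ^ r₁ + v x t ^ r₂) ≤
                  ENNReal.ofReal C * heatS N t (fun y => u₀ y ^ r₁ + v₀ y ^ r₂) x := by
  have hN_pos : (0 : ℝ) < N := Nat.cast_pos.2 hN
  subst hP hQ
  obtain ⟨γ₄, C, hγ₄, hC, h⟩ := statement11_general N p q r₁ r₂ hr₁ hr₂
    (sub_pos.1 ((mul_pos_iff_of_pos_left hN_pos).1 hPpos)).le
    (sub_pos.1 ((mul_pos_iff_of_pos_left hN_pos).1 hQpos)).le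
  simp only [mul_div_cancel_left₀ _ hN_pos.ne']
  exact ⟨γ₄, C, hγ₄, hC, fun u₀ v₀ hu₀ hv₀ hu₀_nonneg hv₀_nonneg hsup_fin T _ =>
    h u₀ v₀ hu₀ hv₀ hu₀_nonneg hv₀_nonneg hsup_fin T⟩
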